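/- Reconstruction of the fused transfer matrix from the fundamental one (diagonal twist): assume in addition that K = diag(α, β, γ), and that for all n ≠ b one has ξ_n² ≠ ξ_b² and ξ_n² ≠ q² ξ_b². Then for all u ≠ 0, writing λ = u³: T₂(u) = (1/2)[αβ(D₁D₂ + (D₁D₂)⁻¹) + αγ(D₁D₃ + (D₁D₃)⁻¹) + βγ(D₂D₃ + (D₂D₃)⁻¹)] ∏_{b=1}^{N} (λ/ξ_b − ξ_b/λ)(λ/(qξ_b) − qξ_b/λ) + Σ_{n=1}^{N} f_n(λ) T₁(ζ_n/p) T₁(ζ_n), where f_n(λ) = ((λ/ξ_n + ξ_n/λ)/2) · ∏_{b=1}^{N} (λ/(qξ_b) − qξ_b/λ)/(ξ_n/(qξ_b) − qξ_b/ξ_n) · ∏_{b=1, b≠n}^{N} (λ/ξ_b − ξ_b/λ)/(ξ_n/ξ_b − ξ_b/ξ_n). -/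

import Mathlib

open Matrix Kronecker BigOperators

/-- Elementary 3×3 matrices `E i j`. -/
noncomputable def Eb (i j : Fin 3) : Matrix (Fin 3) (Fin 3) ℂ :=
  Matrix.single i j 1

/-- Principal gradation trigonometric R-matrix of `U_q(gl₃^)`, with spectral
parameter `λ = u³` parametrized by the cube root `u`. -/
noncomputable def RpM (q u : ℂ) : Matrix (Fin 3 × Fin 3) (Fin 3 × Fin 3) ℂ :=
  (∑ k : Fin 3, ∑ p : Fin 3,
    if k = p then (u ^ 3 * q - (u ^ 3 * q)⁻¹) • (Eb k k ⊗ₖ Eb k k)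
    else (u ^ 3 - (u ^ 3)⁻¹) • (Eb k k ⊗ₖ Eb p p))
  + (q - q⁻¹) • ∑ k : Fin 3, ∑ p : Fin 3,
      (if k < p then
        u ^ ((3 : ℤ) - 2 * (((p : ℕ) : ℤ) - ((k : ℕ) : ℤ))) • (Eb k p ⊗ₖ Eb p k)
        + u ^ (2 * (((p : ℕ) : ℤ) - ((k : ℕ) : ℤ)) - (3 : ℤ)) • (Eb p k ⊗ₖ Eb k p)
      else 0)

/-- Diagonal twist matrix `K⁽¹⁾ = diag(α, β, γ)`. -/
noncomputable def Ktw1 (α β γ : ℂ) : Matrix (Fin 3) (Fin 3) ℂ :=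
  Matrix.diagonal ![α, β, γ]

/-- Cyclic twist matrix `K⁽²⁾ = αE₁₃ + βE₂₁ + γE₃₂`. -/
noncomputable def Ktw2 (α β γ : ℂ) : Matrix (Fin 3) (Fin 3) ℂ :=
  α • Eb 0 2 + β • Eb 1 0 + γ • Eb 2 1

/-- Cyclic twist matrix `K⁽³⁾ = βE₁₂ + γE₂₃ + αE₃₁`. -/
noncomputable def Ktw3 (α β γ : ℂ) : Matrix (Fin 3) (Fin 3) ℂ :=
  β • Eb 0 1 + γ • Eb 1 2 + α • Eb 2 0

/-- Index type of the quantum space `H = (ℂ³)^{⊗N}`. -/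
abbrev HIdx (N : ℕ) := Fin N → Fin 3

/-- `R_{a,b}(u)`: the R-matrix acting on the auxiliary space and the `b`-th
factor of the quantum space, identity elsewhere. -/
noncomputable def Raux (N : ℕ) (q u : ℂ) (b : Fin N) :
    Matrix (Fin 3 × HIdx N) (Fin 3 × HIdx N) ℂ :=
  Matrix.of fun x y =>
    RpM q u (x.1, x.2 b) (y.1, y.2 b) * (if ∀ c, c ≠ b → x.2 c = y.2 c then 1 else 0)

/-- The twist matrix acting on the auxiliary space, identity on `H`. -/
noncomputable def Kaux (N : ℕ) (K : Matrix (Fin 3) (Fin 3) ℂ) :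
    Matrix (Fin 3 × HIdx N) (Fin 3 × HIdx N) ℂ :=
  Matrix.of fun x y => K x.1 y.1 * (if x.2 = y.2 then 1 else 0)

/-- Monodromy matrix `M(u) = K_a R_{a,N}(u/ζ_N) ⋯ R_{a,1}(u/ζ_1)`. -/
noncomputable def Mon (N : ℕ) (q : ℂ) (ζ : Fin N → ℂ) (K : Matrix (Fin 3) (Fin 3) ℂ)
    (u : ℂ) : Matrix (Fin 3 × HIdx N) (Fin 3 × HIdx N) ℂ :=
  Kaux N K * (((List.finRange N).reverse.map fun b => Raux N q (u / ζ b) b).prod)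

/-- Transfer matrix `T₁(u) = tr_a M(u)`. -/
noncomputable def T1 (N : ℕ) (q : ℂ) (ζ : Fin N → ℂ) (K : Matrix (Fin 3) (Fin 3) ℂ)
    (u : ℂ) : Matrix (HIdx N) (HIdx N) ℂ :=
  Matrix.of fun f g => ∑ i : Fin 3, Mon N q ζ K u (i, f) (i, g)

/-- The q-antisymmetric projector `P⁻ = R_q(p⁻¹)/(2(q⁻¹ − q))`. -/
noncomputable def Pm (q p : ℂ) : Matrix (Fin 3 × Fin 3) (Fin 3 × Fin 3) ℂ :=
  (2 * (q⁻¹ - q))⁻¹ • RpM q p⁻¹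

/-- Embedding of an operator on (auxiliary space a) ⊗ H into
(aux a) ⊗ (aux b) ⊗ H, identity on aux b. -/
noncomputable def embA (N : ℕ) (M : Matrix (Fin 3 × HIdx N) (Fin 3 × HIdx N) ℂ) :
    Matrix (Fin 3 × Fin 3 × HIdx N) (Fin 3 × Fin 3 × HIdx N) ℂ :=
  Matrix.of fun x y => M (x.1, x.2.2) (y.1, y.2.2) * (if x.2.1 = y.2.1 then 1 else 0)

/-- Embedding of an operator on (auxiliary space b) ⊗ H into
(aux a) ⊗ (aux b) ⊗ H, identity on aux a. -/
noncomputable def embB (N : ℕ) (M : Matrix (Fin 3 × HIdx N) (Fin 3 × HIdx N) ℂ) :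
    Matrix (Fin 3 × Fin 3 × HIdx N) (Fin 3 × Fin 3 × HIdx N) ℂ :=
  Matrix.of fun x y => M (x.2.1, x.2.2) (y.2.1, y.2.2) * (if x.1 = y.1 then 1 else 0)

/-- Embedding of an operator on (aux a) ⊗ (aux b) into (aux a) ⊗ (aux b) ⊗ H. -/
noncomputable def embP (N : ℕ) (P : Matrix (Fin 3 × Fin 3) (Fin 3 × Fin 3) ℂ) :
    Matrix (Fin 3 × Fin 3 × HIdx N) (Fin 3 × Fin 3 × HIdx N) ℂ :=
  Matrix.of fun x y => P (x.1, x.2.1) (y.1, y.2.1) * (if x.2.2 = y.2.2 then 1 else 0)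

/-- Fused transfer matrix `T₂(u) = tr_{ab}(P⁻_{ab} M_b(u) M_a(u/p))`. -/
noncomputable def T2 (N : ℕ) (q p : ℂ) (ζ : Fin N → ℂ) (K : Matrix (Fin 3) (Fin 3) ℂ)
    (u : ℂ) : Matrix (HIdx N) (HIdx N) ℂ :=
  Matrix.of fun f g => ∑ ia : Fin 3, ∑ ib : Fin 3,
    (embP N (Pm q p) * embB N (Mon N q ζ K u) * embA N (Mon N q ζ K (u / p)))
      (ia, ib, f) (ia, ib, g)

/-- Number of tensor factors of the basis vector indexed by `f` in state `i`. -/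
noncomputable def cnt (N : ℕ) (f : HIdx N) (i : Fin 3) : ℕ :=
  (Finset.univ.filter fun m => f m = i).card

/-- The diagonal operator `D_i = q^{N_i}` on `H`. -/
noncomputable def Dop (N : ℕ) (q : ℂ) (i : Fin 3) : Matrix (HIdx N) (HIdx N) ℂ :=
  Matrix.diagonal fun f => q ^ cnt N f i

/-- The inverse diagonal operator `D_i⁻¹ = q^{−N_i}` on `H`. -/
noncomputable def DopInv (N : ℕ) (q : ℂ) (i : Fin 3) : Matrix (HIdx N) (HIdx N) ℂ :=
  Matrix.diagonal fun f => (q ^ cnt N f i)⁻¹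

set_option linter.unusedSimpArgs false

/-! ### Interpolation -/

theorem eval_eq_nodal_add_sum {N : ℕ} (x : Fin N → ℂ) (hx : Function.Injective x)
    (P : Polynomial ℂ) (hP : P.natDegree ≤ N) (z : ℂ) :
    P.eval z = P.coeff N * ∏ b, (z - x b)
      + ∑ n, P.eval (x n) * ∏ b ∈ Finset.univ.erase n, (z - x b) / (x n - x b) := by
  have hmonic : (Lagrange.nodal Finset.univ x).Monic := Lagrange.nodal_monic
  have hdeg : (Lagrange.nodal Finset.univ x).natDegree = N := by
    simp [Lagrange.natDegree_nodal]
  set Q : Polynomial ℂ := P - Polynomial.C (P.coeff N) * Lagrange.nodal Finset.univ x with hQ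
  have hQdeg : Q.degree < (Finset.univ : Finset (Fin N)).card := by
    rw [Finset.card_univ, Fintype.card_fin, Polynomial.degree_lt_iff_coeff_zero]
    intro m hm
    rcases hm.eq_or_lt with rfl | hm
    · have h1 : (Lagrange.nodal Finset.univ x).coeff N = 1 := by
        have := hmonic.coeff_natDegree
        rwa [hdeg] at this
      simp [hQ, h1]
    · have h1 : P.coeff m = 0 := Polynomial.coeff_eq_zero_of_natDegree_lt (by omega)
      have h2 : (Lagrange.nodal Finset.univ x).coeff m = 0 :=
        Polynomial.coeff_eq_zero_of_natDegree_lt (by omega)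
      simp [hQ, h1, h2]
  have hinterp := Lagrange.eq_interpolate_of_eval_eq (s := Finset.univ) (v := x)
    (fun n => P.eval (x n)) hx.injOn hQdeg (by
      intro i hi
      simp [hQ, Lagrange.eval_nodal_at_node hi])
  have hev := congrArg (Polynomial.eval z) hinterp
  rw [Lagrange.interpolate_apply, Polynomial.eval_finsetSum] at hev
  have hQz : Q.eval z = P.eval z - P.coeff N * ∏ b, (z - x b) := by
    simp [hQ, Lagrange.eval_nodal]
  rw [hQz] at hev
  rw [← sub_eq_iff_eq_add', hev]
  refine Finset.sum_congr rfl fun n _ => ?_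
  rw [Polynomial.eval_mul, Polynomial.eval_C, Lagrange.basis, Polynomial.eval_prod]
  congr 1
  refine Finset.prod_congr rfl fun b _ => ?_
  simp [Lagrange.basisDivisor, div_eq_inv_mul]

/-- Interpolation of a polynomial of degree at most `N` by its values at `N` nonzero nodes and
the mean of its normalized extreme coefficients. -/
theorem eval_eq_extreme_coeff_add_sum {N : ℕ} (x : Fin N → ℂ) (hx : Function.Injective x)
    (hx0 : ∀ b, x b ≠ 0) (P : Polynomial ℂ) (hP : P.natDegree ≤ N) (z : ℂ) :
    P.eval z = (P.coeff N + P.coeff 0 / ∏ b, (-x b)) / 2 * ∏ b, (z - x b)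
      + ∑ n, P.eval (x n) * ((z + x n) / (2 * x n)
          * ∏ b ∈ Finset.univ.erase n, (z - x b) / (x n - x b)) := by
  have h0 := eval_eq_nodal_add_sum x hx P hP 0
  rw [← Polynomial.coeff_zero_eq_eval_zero] at h0
  simp only [zero_sub] at h0
  have hprod : ∏ b, (-x b) ≠ 0 := Finset.prod_ne_zero_iff.2 fun b _ => neg_ne_zero.2 (hx0 b)
  have hn : ∀ n, (∏ b ∈ Finset.univ.erase n, (-x b) / (x n - x b)) / ∏ b, (-x b)
      = -(1 / x n) * ∏ b ∈ Finset.univ.erase n, 1 / (x n - x b) := by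
    intro n
    rw [← Finset.mul_prod_erase Finset.univ (fun b => -x b) (Finset.mem_univ n)] at hprod ⊢
    have h2 := right_ne_zero_of_mul hprod
    have h3 := hx0 n
    simp only [Finset.prod_div_distrib, Finset.prod_const_one]
    field_simp
  have hz : ∀ n, ∏ b, (z - x b) = (z - x n) * ∏ b ∈ Finset.univ.erase n, (z - x b) := fun n =>
    (Finset.mul_prod_erase Finset.univ (fun b => z - x b) (Finset.mem_univ n)).symm
  have hc : P.coeff 0 / ∏ b, (-x b) = P.coeff N + ∑ n, P.eval (x n) *
      (-(1 / x n) * ∏ b ∈ Finset.univ.erase n, 1 / (x n - x b)) := by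
    rw [h0, add_div, mul_div_cancel_right₀ _ hprod, Finset.sum_div]
    congr 1
    refine Finset.sum_congr rfl fun n _ => ?_
    rw [mul_div_assoc, hn]
  rw [eval_eq_nodal_add_sum x hx P hP z, hc]
  have : ((P.coeff N + (P.coeff N + ∑ n, P.eval (x n) *
      (-(1 / x n) * ∏ b ∈ Finset.univ.erase n, 1 / (x n - x b)))) / 2) * ∏ b, (z - x b)
      = P.coeff N * ∏ b, (z - x b) + ∑ n, P.eval (x n) *
      (-(1 / x n) * ∏ b ∈ Finset.univ.erase n, 1 / (x n - x b)) / 2 * ∏ b, (z - x b) := by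
    rw [← Finset.sum_mul, ← Finset.sum_div]
    ring
  rw [this, add_assoc, ← Finset.sum_add_distrib]
  congr 1
  refine Finset.sum_congr rfl fun n _ => ?_
  rw [hz n]
  simp only [Finset.prod_div_distrib, Finset.prod_const_one]
  have := hx0 n
  field_simp
  ring

theorem laurent_interpolation {N : ℕ} (ξ : Fin N → ℂ) (hξ : ∀ b, ξ b ≠ 0)
    (hdist : ∀ n b : Fin N, n ≠ b → ξ n ^ 2 ≠ ξ b ^ 2)
    (P : Polynomial ℂ) (hP : P.natDegree ≤ N) (l : ℂ) (hl : l ≠ 0) :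
    (l ^ N)⁻¹ * P.eval (l ^ 2)
      = (1 / 2 * (P.coeff N * ∏ b, ξ b + P.coeff 0 / ∏ b, (-ξ b)))
          * ∏ b, (l / ξ b - ξ b / l)
        + ∑ n, ((l / ξ n + ξ n / l) / 2
            * ∏ b ∈ Finset.univ.erase n, (l / ξ b - ξ b / l) / (ξ n / ξ b - ξ b / ξ n))
            * ((ξ n ^ N)⁻¹ * P.eval (ξ n ^ 2)) := by
  have hinj : Function.Injective fun b => ξ b ^ 2 := by
    intro a b hab
    by_contra hne
    exact hdist a b hne hab
  have hlin : ∀ b, l / ξ b - ξ b / l = (l ^ 2 - ξ b ^ 2) / (l * ξ b) := by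
    intro b
    have := hξ b
    field_simp
  have hratio : ∀ n, ∏ b ∈ Finset.univ.erase n, (l / ξ b - ξ b / l) / (ξ n / ξ b - ξ b / ξ n)
      = (∏ b ∈ Finset.univ.erase n, (l ^ 2 - ξ b ^ 2) / (ξ n ^ 2 - ξ b ^ 2))
        * (ξ n / l) ^ (N - 1) := by
    intro n
    have hcard : (Finset.univ.erase n).card = N - 1 := by simp
    rw [← hcard, ← Finset.prod_const, ← Finset.prod_mul_distrib]
    refine Finset.prod_congr rfl fun b hb => ?_
    have h1 := hξ b
    have h2 := hξ n
    have h3 : ξ n ^ 2 - ξ b ^ 2 ≠ 0 := sub_ne_zero.2 (hdist n b (Finset.ne_of_mem_erase hb).symm)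
    rw [hlin, show ξ n / ξ b - ξ b / ξ n = (ξ n ^ 2 - ξ b ^ 2) / (ξ n * ξ b) by field_simp]
    field_simp
  rw [eval_eq_extreme_coeff_add_sum _ hinj (fun b => pow_ne_zero 2 (hξ b)) P hP (l ^ 2), mul_add,
    Finset.mul_sum]
  have hprod : ∏ b, ξ b ≠ 0 := Finset.prod_ne_zero_iff.2 fun b _ => hξ b
  have hprodn : ∏ b, (-ξ b) ≠ 0 := Finset.prod_ne_zero_iff.2 fun b _ => neg_ne_zero.2 (hξ b)
  congr 1
  · have h1 : ∏ b, (l / ξ b - ξ b / l) = (∏ b, (l ^ 2 - ξ b ^ 2)) / (l ^ N * ∏ b, ξ b) := by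
      simp only [hlin, Finset.prod_div_distrib, Finset.prod_mul_distrib]
      simp
    have h2 : ∏ b, -(ξ b ^ 2) = (∏ b, ξ b) * ∏ b, (-ξ b) := by
      rw [← Finset.prod_mul_distrib]
      exact Finset.prod_congr rfl fun b _ => by ring
    rw [h1, h2]
    field_simp
  · refine Finset.sum_congr rfl fun n _ => ?_
    rw [hratio n]
    obtain ⟨m, rfl⟩ : ∃ m, N = m + 1 := ⟨N - 1, by have := n.pos; omega⟩
    have := hξ n
    simp only [Nat.add_sub_cancel, div_pow, pow_succ]
    field_simp

/-! ### Matrices over a noncommutative ring -/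

section NoncommutativeEntries

variable {A : Type*} [Ring A]

theorem commute_entry_mul {l m n : Type*} [Fintype m] {a : A} {X : Matrix l m A}
    {Y : Matrix m n A} (hX : ∀ i j, Commute a (X i j)) (hY : ∀ i j, Commute a (Y i j))
    (i : l) (j : n) : Commute a ((X * Y) i j) := by
  rw [Matrix.mul_apply]
  exact Commute.sum_right _ _ _ fun k _ => (hX i k).mul_right (hY k j)

theorem commute_entry_list_prod {ι m : Type*} [Fintype m] [DecidableEq m] {a : A}
    (X : ι → Matrix m m A) (l : List ι) (hX : ∀ b ∈ l, ∀ i j, Commute a (X b i j)) (i j : m) :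
    Commute a ((l.map X).prod i j) := by
  induction l generalizing i j with
  | nil =>
    rw [List.map_nil, List.prod_nil, Matrix.one_apply]
    split_ifs
    · exact Commute.one_right a
    · exact Commute.zero_right a
  | cons b l ih =>
    rw [List.map_cons, List.prod_cons]
    exact commute_entry_mul (hX b (by simp)) (ih fun c hc => hX c (by simp [hc])) i j

theorem kronecker_mul_of_commute {m n : Type*} [Fintype m] [Fintype n]
    (X X' : Matrix m m A) (Y Y' : Matrix n n A)
    (h : ∀ i j k l, Commute (X' i j) (Y k l)) :
    (X * X') ⊗ₖ (Y * Y') = (X ⊗ₖ Y) * (X' ⊗ₖ Y') := by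
  ext s t
  simp only [Matrix.kroneckerMap_apply, Matrix.mul_apply, Fintype.sum_prod_type,
    Finset.sum_mul_sum]
  refine Finset.sum_congr rfl fun i _ => Finset.sum_congr rfl fun j _ => ?_
  rw [mul_assoc, mul_assoc, ← mul_assoc (X' i t.1), (h i t.1 s.2 j).eq, mul_assoc]

theorem kronecker_list_prod {ι m n : Type*} [Fintype m] [Fintype n] [DecidableEq m]
    [DecidableEq n] (X : ι → Matrix m m A) (Y : ι → Matrix n n A)
    (h : ∀ b c, b ≠ c → ∀ i j k l, Commute (X b i j) (Y c k l)) (l : List ι) (hl : l.Nodup) :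
    (l.map X).prod ⊗ₖ (l.map Y).prod = (l.map fun b => X b ⊗ₖ Y b).prod := by
  induction l with
  | nil => ext ⟨i, i'⟩ ⟨j, j'⟩; simp [Matrix.one_apply, Prod.ext_iff, ← ite_and, and_comm]
  | cons b l ih =>
    rw [List.nodup_cons] at hl
    simp only [List.map_cons, List.prod_cons]
    rw [kronecker_mul_of_commute, ih hl.2]
    intro i j k k'
    refine (commute_entry_list_prod X l (fun c hc i j => ?_) i j).symm
    exact (h c b (fun hcb => hl.1 (hcb ▸ hc)) i j k k').symm

theorem trace_mul_comm_of_commute {m n : Type*} [Fintype m] [Fintype n]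
    (X : Matrix m n A) (Y : Matrix n m A) (h : ∀ i j k l, Commute (X i j) (Y k l)) :
    (X * Y).trace = (Y * X).trace := by
  simp only [Matrix.trace, Matrix.diag_apply, Matrix.mul_apply]
  rw [Finset.sum_comm]
  exact Finset.sum_congr rfl fun i _ => Finset.sum_congr rfl fun j _ => (h _ _ _ _).eq

theorem list_prod_mul_intertwine {ι m n : Type*} [Fintype m] [Fintype n] [DecidableEq m]
    [DecidableEq n] (X : ι → Matrix m m A) (Y : ι → Matrix n n A) (V : Matrix m n A)
    (h : ∀ b, X b * V = V * Y b) (l : List ι) :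
    (l.map X).prod * V = V * (l.map Y).prod := by
  induction l with
  | nil => simp
  | cons b l ih =>
    simp only [List.map_cons, List.prod_cons]
    rw [Matrix.mul_assoc, ih, ← Matrix.mul_assoc, h, Matrix.mul_assoc]

theorem list_prod_triangular {ι n : Type*} [Fintype n] [DecidableEq n] (w : n → ℤ)
    (hw : Function.Injective w) (X : ι → Matrix n n A) (hX : ∀ b i j, w j < w i → X b i j = 0)
    (l : List ι) :
    (∀ i j, w j < w i → (l.map X).prod i j = 0)
      ∧ ∀ i, (l.map X).prod i i = (l.map fun b => X b i i).prod := by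
  induction l with
  | nil =>
    refine ⟨fun i j hij => ?_, fun i => by simp⟩
    have hne : i ≠ j := fun h => by simp [h] at hij
    simp [hne]
  | cons b l ih =>
    simp only [List.map_cons, List.prod_cons, Matrix.mul_apply]
    refine ⟨fun i j hij => Finset.sum_eq_zero fun k _ => ?_, fun i => ?_⟩
    · rcases lt_or_ge (w k) (w i) with hk | hk
      · rw [hX b i k hk, zero_mul]
      · rw [ih.1 k j (hij.trans_le hk), mul_zero]
    · rw [Finset.sum_eq_single i, ih.2]
      · intro k _ hk
        rcases lt_or_gt_of_ne (hw.ne hk) with hk | hk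
        · rw [hX b i k hk, zero_mul]
        · rw [ih.1 k i hk, mul_zero]
      · simp

/-- A product of linear polynomials with coefficients in an algebra, seen through a linear
functional. -/
theorem exists_polynomial_list_prod {B ι : Type*} [Ring B] [Algebra ℂ B] (X Y : ι → B)
    (l : List ι) (φ : B →ₗ[ℂ] ℂ) :
    ∃ P : Polynomial ℂ, P.natDegree ≤ l.length ∧ P.coeff l.length = φ (l.map X).prod
      ∧ P.coeff 0 = φ (l.map Y).prod
      ∧ ∀ x : ℂ, P.eval x = φ (l.map fun b => x • X b + Y b).prod := by
  induction l generalizing φ with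
  | nil => exact ⟨Polynomial.C (φ 1), by simp⟩
  | cons b l ih =>
    obtain ⟨P, hPd, hPl, hP0, hPe⟩ := ih (φ ∘ₗ LinearMap.mulLeft ℂ (X b))
    obtain ⟨Q, hQd, hQl, hQ0, hQe⟩ := ih (φ ∘ₗ LinearMap.mulLeft ℂ (Y b))
    refine ⟨Polynomial.X * P + Q, ?_, ?_, ?_, fun x => ?_⟩
    · refine (Polynomial.natDegree_add_le _ _).trans (max_le ?_ ?_)
      · refine Polynomial.natDegree_mul_le.trans ?_
        rw [Polynomial.natDegree_X, List.length_cons]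
        omega
      · exact hQd.trans (by simp)
    · have : Q.coeff (l.length + 1) = 0 := Polynomial.coeff_eq_zero_of_natDegree_lt (by omega)
      simp [this, hPl]
    · simp [hQ0]
    · simp [hPe, hQe, add_mul]

end NoncommutativeEntries

/-! ### The R-matrix in block form and its fusion -/

theorem RpM_eq_diagonal_add (q u : ℂ) :
    RpM q u =
      Matrix.diagonal (fun s : Fin 3 × Fin 3 =>
        if s.1 = s.2 then u ^ 3 * q - (u ^ 3 * q)⁻¹ else u ^ 3 - (u ^ 3)⁻¹)
      + (Matrix.single (0, 1) (1, 0) ((q - q⁻¹) * u) + Matrix.single (1, 0) (0, 1) ((q - q⁻¹) * u⁻¹)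
      + (Matrix.single (0, 2) (2, 0) ((q - q⁻¹) * u⁻¹)
        + Matrix.single (2, 0) (0, 2) ((q - q⁻¹) * u))
      + (Matrix.single (1, 2) (2, 1) ((q - q⁻¹) * u)
        + Matrix.single (2, 1) (1, 2) ((q - q⁻¹) * u⁻¹))) := by
  have hE : ∀ i j k l : Fin 3, Eb i j ⊗ₖ Eb k l = Matrix.single (i, k) (j, l) (1 : ℂ) := by
    intro i j k l
    simp [Eb, Matrix.single_kronecker_single]
  unfold RpM
  simp only [hE, Matrix.smul_single, smul_eq_mul, mul_one]
  congr 1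
  · rw [← Matrix.sum_single_eq_diagonal, Fintype.sum_prod_type]
    refine Finset.sum_congr rfl fun k _ => Finset.sum_congr rfl fun p _ => ?_
    split_ifs with h
    · rw [h]
    · rfl
  · simp [Fin.sum_univ_three, Matrix.smul_single, smul_add]

/-- The R-matrix as a 3×3 matrix on the auxiliary space with entries acting on one site. -/
noncomputable def Rblock (q u : ℂ) : Matrix (Fin 3) (Fin 3) (Matrix (Fin 3) (Fin 3) ℂ) :=
  Matrix.of fun i j => Matrix.of fun s t => RpM q u (i, s) (j, t)

/-- A 3×3 block matrix of the shape of the R-matrix, with weights `a`, `b`, `x`, `y`. -/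
def blockR (a b x y : ℂ) : Matrix (Fin 3) (Fin 3) (Matrix (Fin 3) (Fin 3) ℂ) :=
  !![!![a, 0, 0; 0, b, 0; 0, 0, b], !![0, 0, 0; x, 0, 0; 0, 0, 0], !![0, 0, 0; 0, 0, 0; y, 0, 0];
    !![0, y, 0; 0, 0, 0; 0, 0, 0], !![b, 0, 0; 0, a, 0; 0, 0, b], !![0, 0, 0; 0, 0, 0; 0, x, 0];
    !![0, 0, x; 0, 0, 0; 0, 0, 0], !![0, 0, 0; 0, 0, y; 0, 0, 0], !![b, 0, 0; 0, b, 0; 0, 0, a]]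

theorem Rblock_eq (q u : ℂ) :
    Rblock q u = blockR (u ^ 3 * q - (u ^ 3 * q)⁻¹) (u ^ 3 - (u ^ 3)⁻¹)
      ((q - q⁻¹) * u) ((q - q⁻¹) * u⁻¹) := by
  rw [Rblock, RpM_eq_diagonal_add]
  generalize u ^ 3 * q - (u ^ 3 * q)⁻¹ = a
  generalize u ^ 3 - (u ^ 3)⁻¹ = b
  generalize (q - q⁻¹) * u = x
  generalize (q - q⁻¹) * u⁻¹ = y
  simp only [Matrix.single, Matrix.add_apply, Matrix.of_apply, Matrix.diagonal_apply, Prod.mk.injEq]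
  ext i j s t
  fin_cases i <;> fin_cases j <;> fin_cases s <;> fin_cases t <;>
    simp only [Fin.isValue, Fin.mk_zero, Fin.zero_eta, Fin.mk_one, Fin.reduceFinMk,
      blockR, Matrix.of_apply, Matrix.cons_val] <;> simp

/-- Embedding of the q-antisymmetric vectors; column `k` is the pair of states missing `k`. -/
noncomputable def antisymV (p : ℂ) : Matrix (Fin 3 × Fin 3) (Fin 3) ℂ :=
  Matrix.of fun s k =>
    (![!![0, 0, 0; 0, 0, 1; 0, 1, 0], !![0, 0, -p; 0, 0, 0; 1, 0, 0],
      !![0, -p⁻¹, 0; -p, 0, 0; 0, 0, 0]] s.1 : Matrix (Fin 3) (Fin 3) ℂ) s.2 k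

/-- Coordinates of the q-antisymmetric part. -/
noncomputable def antisymW (p : ℂ) : Matrix (Fin 3) (Fin 3 × Fin 3) ℂ :=
  Matrix.of fun k s =>
    (![!![0, 0, 0; 0, 0, 1 / 2; 0, 1 / 2, 0], !![0, 0, -p⁻¹ / 2; 0, 0, 0; 1 / 2, 0, 0],
      !![0, -p / 2, 0; -p⁻¹ / 2, 0, 0; 0, 0, 0]] s.1 : Matrix (Fin 3) (Fin 3) ℂ) s.2 k

theorem antisymW_mul_antisymV {p : ℂ} (hp : p ≠ 0) : antisymW p * antisymV p = 1 := by
  ext i j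
  simp only [antisymV, antisymW, Matrix.mul_apply, Fintype.sum_prod_type, Fin.sum_univ_three,
    Matrix.of_apply, Matrix.cons_val]
  fin_cases i <;> fin_cases j <;>
    simp only [Fin.isValue, Fin.mk_zero, Fin.zero_eta, Fin.mk_one, Fin.reduceFinMk,
      Matrix.cons_val] <;>
    simp <;> field_simp <;> norm_num

theorem antisymV_mul_antisymW {p : ℂ} (hp : p ≠ 0) (hq2 : (p ^ 3) ^ 2 ≠ 1) :
    antisymV p * antisymW p = Pm (p ^ 3) p := by
  have hR : ∀ i s j t, RpM (p ^ 3) p⁻¹ (i, s) (j, t) = Rblock (p ^ 3) p⁻¹ i j s t :=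
    fun _ _ _ _ => rfl
  have hc : p ^ 3 - (p ^ 3)⁻¹ ≠ 0 := by
    intro h
    apply hq2
    field_simp at h
    linear_combination h
  have hc' : (p ^ 3)⁻¹ - p ^ 3 = -(p ^ 3 - (p ^ 3)⁻¹) := by ring
  have h0 : (p ^ 3)⁻¹ * p ^ 3 - ((p ^ 3)⁻¹ * p ^ 3)⁻¹ = 0 := by
    rw [inv_mul_cancel₀ (pow_ne_zero 3 hp)]
    norm_num
  ext ⟨i, s⟩ ⟨j, t⟩
  rw [Pm, Matrix.smul_apply, hR, Rblock_eq, hc', inv_pow, inv_inv, inv_inv, hc', h0]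
  generalize p ^ 3 - (p ^ 3)⁻¹ = c at hc
  simp only [antisymV, antisymW, blockR, Matrix.mul_apply, Fin.sum_univ_three, Matrix.of_apply]
  fin_cases i <;> fin_cases j <;> fin_cases s <;> fin_cases t <;>
    simp only [Fin.isValue, Fin.mk_zero, Fin.zero_eta, Fin.mk_one, Fin.reduceFinMk,
      Matrix.cons_val] <;> simp [hp] <;> field_simp

/-- The fused R-matrix with its scalar zero divided out. -/
noncomputable def fusedR (p u : ℂ) : Matrix (Fin 3) (Fin 3) (Matrix (Fin 3) (Fin 3) ℂ) :=
  !![!![u ^ 3 - (u ^ 3)⁻¹, 0, 0; 0, u ^ 3 * p ^ 3 - (u ^ 3 * p ^ 3)⁻¹, 0;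
        0, 0, u ^ 3 * p ^ 3 - (u ^ 3 * p ^ 3)⁻¹],
      !![0, (p ^ 3 - (p ^ 3)⁻¹) * (p ^ 2)⁻¹ * u⁻¹, 0; 0, 0, 0; 0, 0, 0],
      !![0, 0, -((p ^ 3 - (p ^ 3)⁻¹) * p * u); 0, 0, 0; 0, 0, 0];
    !![0, 0, 0; (p ^ 3 - (p ^ 3)⁻¹) * p ^ 2 * u, 0, 0; 0, 0, 0],
      !![u ^ 3 * p ^ 3 - (u ^ 3 * p ^ 3)⁻¹, 0, 0; 0, u ^ 3 - (u ^ 3)⁻¹, 0;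
        0, 0, u ^ 3 * p ^ 3 - (u ^ 3 * p ^ 3)⁻¹],
      !![0, 0, 0; 0, 0, (p ^ 3 - (p ^ 3)⁻¹) * u⁻¹; 0, 0, 0];
    !![0, 0, 0; 0, 0, 0; -((p ^ 3 - (p ^ 3)⁻¹) * p⁻¹ * u⁻¹), 0, 0],
      !![0, 0, 0; 0, 0, 0; 0, (p ^ 3 - (p ^ 3)⁻¹) * u, 0],
      !![u ^ 3 * p ^ 3 - (u ^ 3 * p ^ 3)⁻¹, 0, 0; 0, u ^ 3 * p ^ 3 - (u ^ 3 * p ^ 3)⁻¹, 0;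
        0, 0, u ^ 3 - (u ^ 3)⁻¹]]

/-- Scalar matrices as matrices over an algebra. -/
noncomputable abbrev scal {m n : Type*} (A : Type*) [Ring A] [Algebra ℂ A] (X : Matrix m n ℂ) :
    Matrix m n A :=
  X.map (algebraMap ℂ A)

section Antisymmetrizer

variable {A : Type*} [Ring A] [Algebra ℂ A]

theorem mul_scal_antisymV {m : Type*} (p : ℂ) (X : Matrix m (Fin 3 × Fin 3) A) (s : m)
    (k : Fin 3) :
    (X * scal A (antisymV p)) s k
      = ![X s (1, 2) - p • X s (2, 1), X s (0, 2) - p⁻¹ • X s (2, 0),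
          X s (0, 1) - p • X s (1, 0)] k := by
  rw [Matrix.mul_apply, Fintype.sum_prod_type]
  simp only [Fin.sum_univ_three, Matrix.map_apply, antisymV, Matrix.of_apply,
    ← Algebra.commutes, ← Algebra.smul_def]
  fin_cases k <;>
    simp only [Fin.isValue, Fin.mk_zero, Fin.zero_eta, Fin.mk_one, Fin.reduceFinMk,
      Matrix.of_apply, Matrix.cons_val] <;> module

theorem scal_antisymV_mul {m : Type*} (p : ℂ) (Z : Matrix (Fin 3) m A) (i j : Fin 3) (k : m) :
    (scal A (antisymV p) * Z) (i, j) k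
      = ![![0, Z 2 k, Z 1 k], ![-(p • Z 2 k), 0, Z 0 k],
          ![-(p⁻¹ • Z 1 k), -(p • Z 0 k), 0]] i j := by
  rw [Matrix.mul_apply]
  simp only [Fin.sum_univ_three, Matrix.map_apply, antisymV, Matrix.of_apply, ← Algebra.smul_def]
  fin_cases i <;> fin_cases j <;>
    simp only [Fin.isValue, Fin.mk_zero, Fin.zero_eta, Fin.mk_one, Fin.reduceFinMk,
      Matrix.of_apply, Matrix.cons_val] <;> module

theorem scal_antisymW_mul {m : Type*} (p : ℂ) (X : Matrix (Fin 3 × Fin 3) m A) (k : Fin 3)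
    (s : m) :
    (scal A (antisymW p) * X) k s
      = ![(1 / 2 : ℂ) • (X (1, 2) s - p⁻¹ • X (2, 1) s),
          (1 / 2 : ℂ) • (X (0, 2) s - p • X (2, 0) s),
          (1 / 2 : ℂ) • (X (0, 1) s - p⁻¹ • X (1, 0) s)] k := by
  rw [Matrix.mul_apply, Fintype.sum_prod_type]
  simp only [Fin.sum_univ_three, Matrix.map_apply, antisymW, Matrix.of_apply, ← Algebra.smul_def]
  fin_cases k <;>
    simp only [Fin.isValue, Fin.mk_zero, Fin.zero_eta, Fin.mk_one, Fin.reduceFinMk,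
      Matrix.of_apply, Matrix.cons_val] <;> module

theorem mul_scal_antisymW {m : Type*} (p : ℂ) (Z : Matrix m (Fin 3) A) (i j : Fin 3) (k : m) :
    (Z * scal A (antisymW p)) k (i, j)
      = (1 / 2 : ℂ) • ![![0, Z k 2, Z k 1], ![-(p⁻¹ • Z k 2), 0, Z k 0],
          ![-(p • Z k 1), -(p⁻¹ • Z k 0), 0]] i j := by
  rw [Matrix.mul_apply]
  simp only [Fin.sum_univ_three, Matrix.map_apply, antisymW, Matrix.of_apply,
    ← Algebra.commutes, ← Algebra.smul_def]
  fin_cases i <;> fin_cases j <;>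
    simp only [Fin.isValue, Fin.mk_zero, Fin.zero_eta, Fin.mk_one, Fin.reduceFinMk,
      Matrix.of_apply, Matrix.cons_val] <;> module

end Antisymmetrizer

set_option maxHeartbeats 4000000 in
theorem fusion_right {p u : ℂ} (hp : p ≠ 0) (hu : u ≠ 0) :
    (Rblock (p ^ 3) u ⊗ₖ Rblock (p ^ 3) (u / p)).submatrix Prod.swap Prod.swap
        * scal (Matrix (Fin 3) (Fin 3) ℂ) (antisymV p)
      = scal (Matrix (Fin 3) (Fin 3) ℂ) (antisymV p)
        * ((u ^ 3 / p ^ 3 - p ^ 3 / u ^ 3) • fusedR p u) := by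
  rw [Rblock_eq, Rblock_eq]
  ext ⟨i, j⟩ k s t
  rw [mul_scal_antisymV, scal_antisymV_mul]
  simp only [Matrix.submatrix_apply, Prod.swap, Matrix.kroneckerMap_apply, Matrix.smul_apply]
  fin_cases i <;> fin_cases j <;> fin_cases k <;>
    simp only [Fin.isValue, Fin.mk_zero, Fin.zero_eta, Fin.mk_one, Fin.reduceFinMk,
      Matrix.of_apply, Matrix.cons_val, blockR, fusedR, Matrix.mul_apply, Matrix.sub_apply,
      Matrix.neg_apply, Matrix.smul_apply, Fin.sum_univ_three, Matrix.zero_apply] <;>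
    fin_cases s <;> fin_cases t <;>
    simp only [Fin.isValue, Fin.mk_zero, Fin.zero_eta, Fin.mk_one, Fin.reduceFinMk,
      Matrix.cons_val, mul_zero, zero_mul, add_zero, zero_add, sub_zero, zero_sub, smul_zero,
      neg_zero, smul_eq_mul] <;>
    field_simp <;> ring

set_option maxHeartbeats 4000000 in
theorem fusion_left {p u : ℂ} (hp : p ≠ 0) (hu : u ≠ 0) :
    scal (Matrix (Fin 3) (Fin 3) ℂ) (antisymW p)
        * (Rblock (p ^ 3) (u / p) ⊗ₖ Rblock (p ^ 3) u)
      = ((u ^ 3 / p ^ 3 - p ^ 3 / u ^ 3) • fusedR p u)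
        * scal (Matrix (Fin 3) (Fin 3) ℂ) (antisymW p) := by
  rw [Rblock_eq, Rblock_eq]
  ext k ⟨i, j⟩ s t
  rw [scal_antisymW_mul, mul_scal_antisymW]
  simp only [Matrix.kroneckerMap_apply, Matrix.smul_apply]
  fin_cases i <;> fin_cases j <;> fin_cases k <;>
    simp only [Fin.isValue, Fin.mk_zero, Fin.zero_eta, Fin.mk_one, Fin.reduceFinMk,
      Matrix.of_apply, Matrix.cons_val, blockR, fusedR, Matrix.mul_apply, Matrix.sub_apply,
      Matrix.neg_apply, Matrix.smul_apply, Fin.sum_univ_three, Matrix.zero_apply] <;>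
    fin_cases s <;> fin_cases t <;>
    simp only [Fin.isValue, Fin.mk_zero, Fin.zero_eta, Fin.mk_one, Fin.reduceFinMk,
      Matrix.cons_val, mul_zero, zero_mul, add_zero, zero_add, sub_zero, zero_sub, smul_zero,
      neg_zero, smul_eq_mul] <;>
    field_simp <;> ring

set_option maxHeartbeats 4000000 in
theorem fusion_one {p : ℂ} (hp : p ≠ 0) :
    (Rblock (p ^ 3) (1 / p) ⊗ₖ Rblock (p ^ 3) 1)
        * scal (Matrix (Fin 3) (Fin 3) ℂ) (antisymV p)
        * scal (Matrix (Fin 3) (Fin 3) ℂ) (antisymW p)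
      = Rblock (p ^ 3) (1 / p) ⊗ₖ Rblock (p ^ 3) 1 := by
  have hz : (1 / p) ^ 3 * p ^ 3 - ((1 / p) ^ 3 * p ^ 3)⁻¹ = 0 := by
    field_simp
    norm_num
  rw [Rblock_eq, Rblock_eq, hz]
  ext ⟨i, j⟩ ⟨k, l⟩ s t
  rw [mul_scal_antisymW]
  simp only [mul_scal_antisymV, Matrix.kroneckerMap_apply, Matrix.smul_apply]
  fin_cases i <;> fin_cases j <;> fin_cases k <;> fin_cases l <;>
    simp only [Fin.isValue, Fin.mk_zero, Fin.zero_eta, Fin.mk_one, Fin.reduceFinMk,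
      Matrix.of_apply, Matrix.cons_val, blockR, Matrix.mul_apply, Matrix.sub_apply,
      Matrix.neg_apply, Matrix.smul_apply, Fin.sum_univ_three, Matrix.zero_apply] <;>
    fin_cases s <;> fin_cases t <;>
    simp only [Fin.isValue, Fin.mk_zero, Fin.zero_eta, Fin.mk_one, Fin.reduceFinMk,
      Matrix.cons_val, mul_zero, zero_mul, add_zero, zero_add, sub_zero, zero_sub, smul_zero,
      neg_zero, smul_eq_mul] <;>
    field_simp <;> ring

section FusedTraces

variable {A ι m n : Type*} [Ring A] [Fintype m] [Fintype n] [DecidableEq m] [DecidableEq n]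

theorem trace_projector_mul_list_prod (V : Matrix m n A) (W : Matrix n m A)
    (hV : ∀ (a : A) i j, Commute a (V i j)) (hWV : W * V = 1) (K : Matrix m m A)
    (K' : Matrix n n A) (hK : K * V = V * K') (X : ι → Matrix m m A) (L : ι → Matrix n n A)
    (hX : ∀ b, X b * V = V * L b) (l : List ι) :
    (V * W * (K * (l.map X).prod)).trace = (K' * (l.map L).prod).trace := by
  rw [Matrix.mul_assoc, trace_mul_comm_of_commute V _ fun i j k l => (hV _ _ _).symm]
  rw [Matrix.mul_assoc, Matrix.mul_assoc, list_prod_mul_intertwine X L V hX, ← Matrix.mul_assoc K,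
    hK, Matrix.mul_assoc, ← Matrix.mul_assoc W, hWV, Matrix.one_mul]

theorem trace_list_prod_of_mul_projector (V : Matrix m n A) (W : Matrix n m A)
    (hW : ∀ (a : A) i j, Commute a (W i j)) (hWV : W * V = 1) (K : Matrix m m A)
    (K' : Matrix n n A) (hK : W * K = K' * W) (X : ι → Matrix m m A) (L : ι → Matrix n n A)
    (hX : ∀ b, L b * W = W * X b) (l : List ι) {c : ι} (hc : c ∈ l)
    (hXc : X c * V * W = X c) :
    (K * (l.map X).prod).trace = (K' * (l.map L).prod).trace := by
  obtain ⟨l₁, l₂, rfl⟩ := List.append_of_mem hc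
  have h₁ := list_prod_mul_intertwine L X W hX
  simp only [List.map_append, List.map_cons, List.prod_append, List.prod_cons]
  have e : K * ((l₁.map X).prod * (X c * (l₂.map X).prod))
      = (K * (l₁.map X).prod * X c * V * (l₂.map L).prod) * W := by
    conv_lhs => rw [← hXc]
    simp only [Matrix.mul_assoc]
    rw [h₁]
  rw [e, trace_mul_comm_of_commute _ W fun i j k l => hW _ _ _]
  simp only [← Matrix.mul_assoc]
  rw [hK, Matrix.mul_assoc K', ← h₁]
  simp only [Matrix.mul_assoc]
  rw [← Matrix.mul_assoc W (X c), ← hX, Matrix.mul_assoc (L c), ← Matrix.mul_assoc W V, hWV,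
    Matrix.one_mul]

end FusedTraces

/-! ### Operators acting on a single site -/

theorem sum_eq_sum_update {N : ℕ} (f : HIdx N) (b : Fin N) (F : HIdx N → ℂ)
    (hF : ∀ h, ¬ (∀ c, c ≠ b → f c = h c) → F h = 0) :
    ∑ h, F h = ∑ s, F (Function.update f b s) := by
  symm
  refine Fintype.sum_of_injective _ (Function.update_injective f b) _ _ (fun h hh => ?_)
    fun _ => rfl
  refine hF h fun hfh => hh ⟨h b, ?_⟩
  ext1 c
  by_cases hc : c = b
  · subst hc; simp
  · simp [hc, hfh c hc]

/-- The embedding of one-site operators into operators on the quantum space. -/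
noncomputable def siteEmb {N : ℕ} (b : Fin N) :
    Matrix (Fin 3) (Fin 3) ℂ →ₐ[ℂ] Matrix (HIdx N) (HIdx N) ℂ :=
  AlgHom.ofLinearMap
    { toFun := fun m => Matrix.of fun f g =>
        m (f b) (g b) * (if ∀ c, c ≠ b → f c = g c then 1 else 0)
      map_add' := fun m m' => by ext f g; simp [ite_add_ite]
      map_smul' := fun r m => by ext f g; simp }
    (by
      ext f g
      simp only [LinearMap.coe_mk, AddHom.coe_mk, Matrix.of_apply, Matrix.one_apply, mul_ite,
        mul_one, mul_zero]
      rw [← ite_and]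
      refine if_congr ⟨fun h => ?_, fun h => ?_⟩ rfl rfl
      · ext1 c
        by_cases hc : c = b
        · exact hc ▸ h.2
        · exact h.1 c hc
      · subst h; simp)
    (fun m m' => by
      ext f g
      simp only [LinearMap.coe_mk, AddHom.coe_mk, Matrix.of_apply, Matrix.mul_apply]
      rw [sum_eq_sum_update f b _ fun h hh => by simp [if_neg hh], Finset.sum_mul]
      refine Finset.sum_congr rfl fun s _ => ?_
      have h₁ : ∀ c, c ≠ b → f c = Function.update f b s c := fun c hc => by simp [hc]
      have h₂ : (∀ c, c ≠ b → Function.update f b s c = g c) ↔ ∀ c, c ≠ b → f c = g c :=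
        forall₂_congr fun c hc => by simp [hc]
      simp only [if_pos h₁, h₂, Function.update_self, mul_one, mul_assoc])

theorem siteEmb_apply {N : ℕ} (b : Fin N) (m : Matrix (Fin 3) (Fin 3) ℂ) (f g : HIdx N) :
    siteEmb b m f g = m (f b) (g b) * (if ∀ c, c ≠ b → f c = g c then 1 else 0) :=
  rfl

theorem siteEmb_mul_siteEmb_apply {N : ℕ} {b c : Fin N} (hbc : b ≠ c)
    (m m' : Matrix (Fin 3) (Fin 3) ℂ) (f g : HIdx N) :
    (siteEmb b m * siteEmb c m') f g = m (f b) (g b) * m' (f c) (g c)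
      * (if ∀ d, d ≠ b → d ≠ c → f d = g d then 1 else 0) := by
  simp only [Matrix.mul_apply, siteEmb_apply]
  rw [sum_eq_sum_update f b _ fun h hh => by simp [if_neg hh], Finset.sum_eq_single (g b)]
  · have h₁ : ∀ d, d ≠ b → f d = Function.update f b (g b) d := fun d hd => by simp [hd]
    have h₂ : (∀ d, d ≠ c → Function.update f b (g b) d = g d)
        ↔ ∀ d, d ≠ b → d ≠ c → f d = g d := by
      refine forall_congr' fun d => ?_
      by_cases hd : d = b
      · subst hd; simp
      · simp [hd]
    simp only [if_pos h₁, h₂, Function.update_self, Function.update_of_ne hbc.symm, mul_one,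
      mul_assoc]
  · intro s _ hs
    have h₃ : ¬ ∀ d, d ≠ c → Function.update f b s d = g d := fun h =>
      hs (by simpa using h b hbc)
    rw [if_neg h₃, mul_zero, mul_zero]
  · simp

theorem commute_siteEmb {N : ℕ} {b c : Fin N} (hbc : b ≠ c) (m m' : Matrix (Fin 3) (Fin 3) ℂ) :
    Commute (siteEmb b m) (siteEmb c m') := by
  ext f g
  rw [siteEmb_mul_siteEmb_apply hbc, siteEmb_mul_siteEmb_apply hbc.symm, mul_comm (m _ _)]
  congr 1
  exact if_congr (forall_congr' fun d => ⟨fun h h₁ h₂ => h h₂ h₁, fun h h₁ h₂ => h h₂ h₁⟩) rfl rfl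

/-! ### Transfer matrices as traces over the operators on the quantum space -/

theorem commute_scal {A m n : Type*} [Ring A] [Algebra ℂ A] (X : Matrix m n ℂ) (a : A) (i : m)
    (j : n) : Commute a (scal A X i j) :=
  Algebra.commute_algebraMap_right _ _

theorem scal_mul {A l m n : Type*} [Ring A] [Algebra ℂ A] [Fintype m] (X : Matrix l m ℂ)
    (Y : Matrix m n ℂ) : scal A (X * Y) = scal A X * scal A Y :=
  Matrix.map_mul

theorem scal_kronecker {A l m n o : Type*} [Ring A] [Algebra ℂ A] (X : Matrix l m ℂ)
    (Y : Matrix n o ℂ) : scal A (X ⊗ₖ Y) = scal A X ⊗ₖ scal A Y := by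
  ext i j
  simp [scal]

theorem map_scal {A B m n : Type*} [Ring A] [Algebra ℂ A] [Ring B] [Algebra ℂ B] (f : A →ₐ[ℂ] B)
    (X : Matrix m n ℂ) : (scal A X).map f = scal B X := by
  ext i j
  simp [scal]

theorem map_kronecker {A B l m n o : Type*} [Ring A] [Algebra ℂ A] [Ring B] [Algebra ℂ B]
    (f : A →ₐ[ℂ] B) (X : Matrix l m A) (Y : Matrix n o A) :
    (X ⊗ₖ Y).map f = X.map f ⊗ₖ Y.map f := by
  ext i j
  simp

/-- Operators on the quantum space. -/
abbrev HOp (N : ℕ) := Matrix (HIdx N) (HIdx N) ℂ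

section Transfer

variable {N : ℕ}

/-- The R-matrix acting on the auxiliary space and on site `b`, in block form. -/
noncomputable def Rsite (b : Fin N) (q u : ℂ) :
    Matrix (Fin 3) (Fin 3) (HOp N) :=
  (Rblock q u).map (siteEmb b)

/-- The fused R-matrix acting on the auxiliary space and on site `b`, in block form. -/
noncomputable def fusedSite (b : Fin N) (p u : ℂ) :
    Matrix (Fin 3) (Fin 3) (HOp N) :=
  (u ^ 3 / p ^ 3 - p ^ 3 / u ^ 3) • (fusedR p u).map (siteEmb b)

/-- The antisymmetrized twist; entry `k` belongs to the pair of states missing `k`. -/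
def fusedTwist (α β γ : ℂ) : Matrix (Fin 3) (Fin 3) ℂ :=
  Matrix.diagonal ![β * γ, α * γ, α * β]

theorem commute_Rsite {b c : Fin N} (hbc : b ≠ c) (q u v : ℂ) (i j k l : Fin 3) :
    Commute (Rsite b q u i j) (Rsite c q v k l) :=
  commute_siteEmb hbc _ _

theorem Rsite_fusion_right (b : Fin N) {p u : ℂ} (hp : p ≠ 0) (hu : u ≠ 0) :
    (Rsite b (p ^ 3) u ⊗ₖ Rsite b (p ^ 3) (u / p))
        * scal (HOp N) ((antisymV p).submatrix Prod.swap id)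
      = scal (HOp N) ((antisymV p).submatrix Prod.swap id) * fusedSite b p u := by
  have h := congrArg (fun X => X.map (siteEmb b)) (fusion_right hp hu)
  simp only [Matrix.map_mul, map_scal, Matrix.map_smul _ _ fun a => map_smul (siteEmb b) _ a] at h
  have h' := congrArg (fun X => X.submatrix Prod.swap id) h
  rw [← Matrix.submatrix_mul_equiv _ _ _ (Equiv.prodComm _ _) _] at h'
  simp only [← Matrix.submatrix_map, Matrix.submatrix_submatrix, map_kronecker] at h'
  exact h'

theorem Rsite_fusion_left (b : Fin N) {p u : ℂ} (hp : p ≠ 0) (hu : u ≠ 0) :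
    fusedSite b p u * scal (HOp N) (antisymW p)
      = scal (HOp N) (antisymW p) * (Rsite b (p ^ 3) (u / p) ⊗ₖ Rsite b (p ^ 3) u) := by
  have h := congrArg (fun X => X.map (siteEmb b)) (fusion_left hp hu)
  simp only [Matrix.map_mul, map_scal, map_kronecker] at h
  rw [fusedSite, ← Matrix.map_smul _ _ (fun a => map_smul _ _ a)]
  exact h.symm

theorem Rsite_fusion_one (b : Fin N) {p : ℂ} (hp : p ≠ 0) :
    (Rsite b (p ^ 3) (1 / p) ⊗ₖ Rsite b (p ^ 3) 1) * scal (HOp N) (antisymV p)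
        * scal (HOp N) (antisymW p)
      = Rsite b (p ^ 3) (1 / p) ⊗ₖ Rsite b (p ^ 3) 1 := by
  have h := congrArg (fun X => X.map (siteEmb b)) (fusion_one hp)
  simp only [Matrix.map_mul, map_scal, map_kronecker] at h
  exact h

theorem twist_mul_antisymV (α β γ p : ℂ) :
    (Ktw1 α β γ ⊗ₖ Ktw1 α β γ) * (antisymV p).submatrix Prod.swap id
      = (antisymV p).submatrix Prod.swap id * fusedTwist α β γ := by
  rw [Ktw1, fusedTwist, Matrix.diagonal_kronecker_diagonal]
  ext ⟨i, j⟩ k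
  rw [Matrix.diagonal_mul, Matrix.mul_diagonal]
  simp only [antisymV, Matrix.submatrix_apply, Prod.swap, id, Matrix.of_apply]
  fin_cases i <;> fin_cases j <;> fin_cases k <;>
    simp only [Fin.isValue, Fin.mk_zero, Fin.zero_eta, Fin.mk_one, Fin.reduceFinMk,
      Matrix.of_apply, Matrix.cons_val] <;> ring

theorem antisymW_mul_twist (α β γ p : ℂ) :
    antisymW p * (Ktw1 α β γ ⊗ₖ Ktw1 α β γ) = fusedTwist α β γ * antisymW p := by
  rw [Ktw1, fusedTwist, Matrix.diagonal_kronecker_diagonal]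
  ext k ⟨i, j⟩
  rw [Matrix.diagonal_mul, Matrix.mul_diagonal]
  simp only [antisymW, Matrix.of_apply]
  fin_cases i <;> fin_cases j <;> fin_cases k <;>
    simp only [Fin.isValue, Fin.mk_zero, Fin.zero_eta, Fin.mk_one, Fin.reduceFinMk,
      Matrix.of_apply, Matrix.cons_val] <;> ring

/-- The monodromy matrix in block form. -/
noncomputable def monBlock (q : ℂ) (ζ : Fin N → ℂ) (K : Matrix (Fin 3) (Fin 3) ℂ) (u : ℂ) :
    Matrix (Fin 3) (Fin 3) (HOp N) :=
  scal (HOp N) K * ((List.finRange N).reverse.map fun b => Rsite b q (u / ζ b)).prod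

theorem Mon_apply (q : ℂ) (ζ : Fin N → ℂ) (K : Matrix (Fin 3) (Fin 3) ℂ) (u : ℂ)
    (x y : Fin 3 × HIdx N) : Mon N q ζ K u x y = monBlock q ζ K u x.1 y.1 x.2 y.2 := by
  have hK : Kaux N K = Matrix.compRingEquiv _ _ _ (scal (HOp N) K) := by
    ext x y
    simp [Kaux, Matrix.compRingEquiv_apply, Matrix.algebraMap_matrix_apply]
  have hR : ∀ b v, Raux N q v b = Matrix.compRingEquiv _ _ _ (Rsite b q v) := fun b v => rfl
  have : Mon N q ζ K u = Matrix.compRingEquiv _ _ _ (monBlock q ζ K u) := by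
    rw [Mon, monBlock, map_mul, map_list_prod, List.map_map, hK]
    simp only [hR]
    rfl
  rw [this]
  rfl

theorem T1_eq_trace (q : ℂ) (ζ : Fin N → ℂ) (K : Matrix (Fin 3) (Fin 3) ℂ) (u : ℂ) :
    T1 N q ζ K u = (monBlock q ζ K u).trace := by
  ext f g
  simp only [T1, Matrix.of_apply, Mon_apply, Matrix.trace, Matrix.diag_apply, Matrix.sum_apply]

theorem T2_eq_trace (q p : ℂ) (ζ : Fin N → ℂ) (K : Matrix (Fin 3) (Fin 3) ℂ) (u : ℂ) :
    T2 N q p ζ K u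
      = (scal (HOp N) ((Pm q p).submatrix Prod.swap Prod.swap)
          * (monBlock q ζ K u ⊗ₖ monBlock q ζ K (u / p))).trace := by
  ext f g
  simp only [T2, Matrix.of_apply, Matrix.trace, Matrix.diag_apply, Matrix.sum_apply,
    Fintype.sum_prod_type]
  rw [Finset.sum_comm]
  refine Finset.sum_congr rfl fun i _ => Finset.sum_congr rfl fun j _ => ?_
  simp only [Matrix.mul_apply, embP, embB, embA, Mon_apply, Matrix.of_apply,
    Fintype.sum_prod_type, Matrix.sum_apply, Matrix.map_apply, Matrix.submatrix_apply,
    Matrix.kroneckerMap_apply, Matrix.algebraMap_matrix_apply, mul_ite, ite_mul, mul_one, mul_zero,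
    zero_mul, Finset.sum_ite_eq, Finset.sum_ite_eq', Finset.mem_univ, if_true, Prod.swap,
    Finset.sum_const_zero]
  have inner : ∀ x y h, (∑ x₃, ∑ x₄, ∑ x₅, if x₃ = x then
        if f = x₅ then Pm q p (j, i) (x₃, x₄) * monBlock q ζ K u x₄ y x₅ h else 0 else 0)
      = ∑ x₄, Pm q p (j, i) (x, x₄) * monBlock q ζ K u x₄ y f h := by
    intro x y h
    rw [Finset.sum_eq_single x (fun x₃ _ hx => by simp [hx]) (by simp)]
    simp
  simp only [inner]
  rw [Finset.sum_comm (f := fun x x₁ => (algebraMap ℂ ℂ) _ * _)]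
  refine Finset.sum_congr rfl fun x _ => ?_
  rw [Finset.sum_eq_single i (fun y _ hy => by simp [hy]) (by simp)]
  simp only [if_true, Finset.sum_mul, Finset.mul_sum]
  rw [Finset.sum_comm]
  exact Finset.sum_congr rfl fun y _ => Finset.sum_congr rfl fun h _ => mul_assoc _ _ _

theorem monBlock_kronecker_monBlock (q : ℂ) (ζ : Fin N → ℂ) (K : Matrix (Fin 3) (Fin 3) ℂ)
    (u v : ℂ) :
    monBlock q ζ K u ⊗ₖ monBlock q ζ K v
      = scal (HOp N) (K ⊗ₖ K) * ((List.finRange N).reverse.map fun b =>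
          Rsite b q (u / ζ b) ⊗ₖ Rsite b q (v / ζ b)).prod := by
  rw [monBlock, monBlock, kronecker_mul_of_commute _ _ _ _ fun i j k l => commute_scal K _ k l,
    kronecker_list_prod _ _ (fun b c hbc => commute_Rsite hbc _ _ _) _
      (List.nodup_reverse.2 (List.nodup_finRange N)), scal_kronecker]

theorem T2_eq_fused {p : ℂ} (hp : p ≠ 0) (hq2 : (p ^ 3) ^ 2 ≠ 1) (ζ : Fin N → ℂ)
    (hζ : ∀ b, ζ b ≠ 0) (α β γ : ℂ) {u : ℂ} (hu : u ≠ 0) :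
    T2 N (p ^ 3) p ζ (Ktw1 α β γ) u
      = (scal (HOp N) (fusedTwist α β γ)
          * ((List.finRange N).reverse.map fun b => fusedSite b p (u / ζ b)).prod).trace := by
  have hdiv : ∀ b, u / p / ζ b = u / ζ b / p := fun b => div_right_comm _ _ _
  have hP : (Pm (p ^ 3) p).submatrix Prod.swap Prod.swap
      = (antisymV p).submatrix Prod.swap id * (antisymW p).submatrix id Prod.swap := by
    rw [← antisymV_mul_antisymW hp hq2]
    rfl
  have hWV : (antisymW p).submatrix id Prod.swap * (antisymV p).submatrix Prod.swap id = 1 := by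
    rw [← antisymW_mul_antisymV hp]
    exact Matrix.submatrix_mul_equiv _ _ id (Equiv.prodComm _ _) id
  rw [T2_eq_trace, monBlock_kronecker_monBlock, hP, scal_mul]
  simp only [hdiv]
  refine trace_projector_mul_list_prod _ _
    (fun a i j => commute_scal ((antisymV p).submatrix Prod.swap id) a i j) ?_ _ _ ?_ _ _
    (fun b => Rsite_fusion_right b hp (div_ne_zero hu (hζ b))) _
  · rw [← scal_mul, hWV]
    simp [scal]
  · rw [← scal_mul, ← scal_mul, twist_mul_antisymV]

theorem T1_mul_T1_eq_fused {p : ℂ} (hp : p ≠ 0) (ζ : Fin N → ℂ) (hζ : ∀ b, ζ b ≠ 0)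
    (α β γ : ℂ) (n : Fin N) :
    T1 N (p ^ 3) ζ (Ktw1 α β γ) (ζ n / p) * T1 N (p ^ 3) ζ (Ktw1 α β γ) (ζ n)
      = (scal (HOp N) (fusedTwist α β γ)
          * ((List.finRange N).reverse.map fun b => fusedSite b p (ζ n / ζ b)).prod).trace := by
  have hdiv : ∀ b, ζ n / p / ζ b = ζ n / ζ b / p := fun b => div_right_comm _ _ _
  rw [T1_eq_trace, T1_eq_trace, ← Matrix.trace_kronecker, monBlock_kronecker_monBlock]
  simp only [hdiv]
  refine trace_list_prod_of_mul_projector (scal (HOp N) (antisymV p))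
    (scal (HOp N) (antisymW p))
    (fun a i j => commute_scal (antisymW p) a i j) ?_ _ _ ?_ _ _
    (fun b => Rsite_fusion_left b hp (div_ne_zero (hζ n) (hζ b))) _ (c := n) (by simp) ?_
  · rw [← scal_mul, antisymW_mul_antisymV hp]
    simp [scal]
  · rw [← scal_mul, ← scal_mul, antisymW_mul_twist]
  · rw [div_self (hζ n)]
    exact Rsite_fusion_one n hp

end Transfer

/-! ### Polynomial dependence on the spectral parameter -/

/-- The part of the gauge-transformed fused R-matrix with top degree in the spectral parameter. -/
noncomputable def fusedTop (p z : ℂ) : Matrix (Fin 3) (Fin 3) (Matrix (Fin 3) (Fin 3) ℂ) :=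
  !![Matrix.diagonal fun s => (z ^ 3)⁻¹ * if s = 0 then 1 else p ^ 3, 0, 0;
    Matrix.single 1 0 ((p ^ 3 - (p ^ 3)⁻¹) * p ^ 2 * z⁻¹),
      Matrix.diagonal fun s => (z ^ 3)⁻¹ * if s = 1 then 1 else p ^ 3, 0;
    Matrix.single 2 0 (-((p ^ 3 - (p ^ 3)⁻¹) * p⁻¹ * z)),
      Matrix.single 2 1 ((p ^ 3 - (p ^ 3)⁻¹) * z⁻¹),
      Matrix.diagonal fun s => (z ^ 3)⁻¹ * if s = 2 then 1 else p ^ 3]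

/-- The part of the gauge-transformed fused R-matrix with lowest degree in the spectral
parameter. -/
noncomputable def fusedBot (p z : ℂ) : Matrix (Fin 3) (Fin 3) (Matrix (Fin 3) (Fin 3) ℂ) :=
  !![Matrix.diagonal fun s => -z ^ 3 * if s = 0 then 1 else (p ^ 3)⁻¹,
      Matrix.single 0 1 ((p ^ 3 - (p ^ 3)⁻¹) * (p ^ 2)⁻¹ * z),
      Matrix.single 0 2 (-((p ^ 3 - (p ^ 3)⁻¹) * p * z⁻¹));
    0, Matrix.diagonal fun s => -z ^ 3 * if s = 1 then 1 else (p ^ 3)⁻¹,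
      Matrix.single 1 2 ((p ^ 3 - (p ^ 3)⁻¹) * z);
    0, 0, Matrix.diagonal fun s => -z ^ 3 * if s = 2 then 1 else (p ^ 3)⁻¹]

theorem fusedTop_diag (p z : ℂ) (k : Fin 3) :
    fusedTop p z k k = Matrix.diagonal fun s => (z ^ 3)⁻¹ * if s = k then 1 else p ^ 3 := by
  fin_cases k <;> rfl

theorem fusedBot_diag (p z : ℂ) (k : Fin 3) :
    fusedBot p z k k = Matrix.diagonal fun s => -z ^ 3 * if s = k then 1 else (p ^ 3)⁻¹ := by
  fin_cases k <;> rfl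

theorem fusedTop_eq_zero (p z : ℂ) {i j : Fin 3} (h : i < j) : fusedTop p z i j = 0 := by
  fin_cases i <;> fin_cases j <;> first | rfl | exact absurd h (by decide)

theorem fusedBot_eq_zero (p z : ℂ) {i j : Fin 3} (h : j < i) : fusedBot p z i j = 0 := by
  fin_cases i <;> fin_cases j <;> first | rfl | exact absurd h (by decide)

/-- The change of gauge from the principal to the homogeneous gradation. -/
def gaugeMat (u : ℂ) : Matrix (Fin 3) (Fin 3) ℂ :=
  Matrix.diagonal ![1, u ^ 2, u ^ 4]

theorem gauge_intertwine {p u z : ℂ} (hp : p ≠ 0) (hu : u ≠ 0) (hz : z ≠ 0) :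
    ((u ^ 3) ^ 2 • fusedTop p z + fusedBot p z) * scal (Matrix (Fin 3) (Fin 3) ℂ) (gaugeMat u)
      = scal (Matrix (Fin 3) (Fin 3) ℂ) (gaugeMat u) * (u ^ 3 • fusedR p (u / z)) := by
  rw [gaugeMat, scal, Matrix.diagonal_map (map_zero _)]
  ext i j s t
  rw [Matrix.mul_diagonal, Matrix.diagonal_mul, ← Algebra.commutes, ← Algebra.smul_def,
    ← Algebra.smul_def]
  simp only [Matrix.smul_apply, Matrix.add_apply, fusedTop, fusedBot, fusedR]
  fin_cases i <;> fin_cases j <;>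
    simp only [Fin.isValue, Fin.mk_zero, Fin.zero_eta, Fin.mk_one, Fin.reduceFinMk,
      Matrix.of_apply, Matrix.cons_val, Matrix.zero_apply, Matrix.single_apply,
      Matrix.diagonal_apply] <;>
    fin_cases s <;> fin_cases t <;>
    simp only [Fin.isValue, Fin.mk_zero, Fin.zero_eta, Fin.mk_one, Fin.reduceFinMk,
      Matrix.cons_val, Fin.reduceEq, and_self, and_true, and_false, true_and, false_and, if_true,
      if_false, mul_zero, add_zero, zero_add, smul_zero, smul_eq_mul] <;>
    field_simp <;> ring

theorem siteEmb_diagonal {N : ℕ} (b : Fin N) (d : Fin 3 → ℂ) :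
    siteEmb b (Matrix.diagonal d) = Matrix.diagonal fun f => d (f b) := by
  ext f g
  rw [siteEmb_apply, Matrix.diagonal_apply, Matrix.diagonal_apply]
  by_cases hfg : f = g
  · simp [hfg]
  · rw [if_neg hfg]
    by_cases hb : f b = g b
    · rw [if_neg (c := ∀ c, c ≠ b → f c = g c), mul_zero]
      refine fun h => hfg (funext fun c => ?_)
      by_cases hc : c = b
      · exact hc ▸ hb
      · exact h c hc
    · simp [hb]

theorem list_prod_siteEmb_diagonal {N : ℕ} (d : Fin N → Fin 3 → ℂ) (l : List (Fin N)) :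
    (l.map fun b => siteEmb b (Matrix.diagonal (d b))).prod
      = Matrix.diagonal fun f : HIdx N => (l.map fun b => d b (f b)).prod := by
  induction l with
  | nil => simp
  | cons b l ih =>
    simp only [List.map_cons, List.prod_cons]
    rw [ih, siteEmb_diagonal, Matrix.diagonal_mul_diagonal]

theorem list_prod_finRange_reverse {N : ℕ} (F : Fin N → ℂ) :
    ((List.finRange N).reverse.map F).prod = ∏ b, F b := by
  rw [← List.prod_toFinset F (List.nodup_reverse.2 (List.nodup_finRange N))]
  congr 1
  ext b
  simp

theorem trace_list_prod_of_triangular {N : ℕ} (w : Fin 3 → ℤ) (hw : Function.Injective w)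
    (X : Fin N → Matrix (Fin 3) (Fin 3) (HOp N)) (hX : ∀ b i j, w j < w i → X b i j = 0)
    (d : Fin N → Fin 3 → Fin 3 → ℂ)
    (hd : ∀ b k, X b k k = siteEmb b (Matrix.diagonal (d b k))) (κ : Fin 3 → ℂ) :
    (scal (HOp N) (Matrix.diagonal κ) * ((List.finRange N).reverse.map X).prod).trace
      = ∑ k, κ k • Matrix.diagonal fun f : HIdx N => ∏ b, d b k (f b) := by
  rw [scal, Matrix.diagonal_map (map_zero _), Matrix.trace]
  refine Finset.sum_congr rfl fun k _ => ?_
  rw [Matrix.diag_apply, Matrix.diagonal_mul, (list_prod_triangular w hw X hX _).2,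
    ← Algebra.smul_def]
  simp only [hd]
  rw [list_prod_siteEmb_diagonal (fun b => d b k)]
  simp only [list_prod_finRange_reverse]

theorem list_prod_smul {ι B : Type*} [Ring B] [Algebra ℂ B] (c : ι → ℂ) (X : ι → B)
    (l : List ι) : (l.map fun b => c b • X b).prod = (l.map c).prod • (l.map X).prod := by
  induction l with
  | nil => simp
  | cons b l ih => simp only [List.map_cons, List.prod_cons, ih, smul_mul_smul_comm]

section Polynomial

variable {N : ℕ}

theorem trace_fused_eq {p u : ℂ} (hp : p ≠ 0) (hu : u ≠ 0) (ζ : Fin N → ℂ) (hζ : ∀ b, ζ b ≠ 0)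
    (α β γ : ℂ) :
    (scal (HOp N) (fusedTwist α β γ)
        * ((List.finRange N).reverse.map fun b => fusedSite b p (u / ζ b)).prod).trace
      = ((∏ b, (u ^ 3 / (p ^ 3 * ζ b ^ 3) - p ^ 3 * ζ b ^ 3 / u ^ 3)) * ((u ^ 3) ^ N)⁻¹)
        • (scal (HOp N) (fusedTwist α β γ) * ((List.finRange N).reverse.map fun b =>
            (u ^ 3) ^ 2 • (fusedTop p (ζ b)).map (siteEmb b)
              + (fusedBot p (ζ b)).map (siteEmb b)).prod).trace := by
  have hG : gaugeMat u * gaugeMat u⁻¹ = 1 ∧ gaugeMat u⁻¹ * gaugeMat u = 1 := by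
    constructor <;> rw [gaugeMat, gaugeMat, Matrix.diagonal_mul_diagonal, ← Matrix.diagonal_one] <;>
      congr 1 <;> ext k <;> fin_cases k <;> simp [hu]
  have hcomm : fusedTwist α β γ * gaugeMat u = gaugeMat u * fusedTwist α β γ := by
    rw [gaugeMat, fusedTwist, Matrix.diagonal_mul_diagonal, Matrix.diagonal_mul_diagonal]
    simp only [mul_comm]
  have h1 : scal (HOp N) (1 : Matrix (Fin 3) (Fin 3) ℂ) = 1 := by simp [scal]
  have hX : ∀ b, ((u ^ 3) ^ 2 • (fusedTop p (ζ b)).map (siteEmb b)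
        + (fusedBot p (ζ b)).map (siteEmb b)) * scal (HOp N) (gaugeMat u)
      = scal (HOp N) (gaugeMat u) * (u ^ 3 • (fusedR p (u / ζ b)).map (siteEmb b)) := by
    intro b
    have h := congrArg (fun X => X.map (siteEmb b)) (gauge_intertwine hp hu (hζ b))
    simp only [Matrix.map_mul, map_scal, Matrix.map_add _ (map_add (siteEmb b)),
      Matrix.map_smul _ _ fun a => map_smul (siteEmb b) _ a] at h
    exact h
  have h := trace_projector_mul_list_prod (scal (HOp N) (gaugeMat u)) (scal (HOp N) (gaugeMat u⁻¹))
    (fun a i j => commute_scal (gaugeMat u) a i j) (by rw [← scal_mul, hG.2, h1])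
    (scal (HOp N) (fusedTwist α β γ)) (scal (HOp N) (fusedTwist α β γ))
    (by rw [← scal_mul, ← scal_mul, hcomm]) _ _ hX (List.finRange N).reverse
  rw [← scal_mul, hG.1, h1, Matrix.one_mul] at h
  rw [h]
  have hc : ∀ b, (u / ζ b) ^ 3 / p ^ 3 - p ^ 3 / (u / ζ b) ^ 3
      = u ^ 3 / (p ^ 3 * ζ b ^ 3) - p ^ 3 * ζ b ^ 3 / u ^ 3 := by
    intro b
    have := hζ b
    field_simp
  simp only [fusedSite, hc]
  rw [list_prod_smul, list_prod_smul (fun _ => u ^ 3), list_prod_finRange_reverse,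
    list_prod_finRange_reverse, Finset.prod_const, Finset.card_univ, Fintype.card_fin,
    Matrix.mul_smul, Matrix.mul_smul, Matrix.trace_smul, Matrix.trace_smul, smul_smul, mul_assoc,
    inv_mul_cancel₀ (pow_ne_zero _ (pow_ne_zero _ hu)), mul_one]

theorem prod_ite_eq_pow_cnt (r : ℂ) (f : HIdx N) {i j k : Fin 3} (hij : i ≠ j) (hik : i ≠ k)
    (hjk : j ≠ k) : ∏ b, (if f b = k then 1 else r) = r ^ cnt N f i * r ^ cnt N f j := by
  have h : ∀ s : Fin 3, (if s = k then 1 else r)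
      = (if s = i then r else 1) * if s = j then r else 1 := by
    intro s
    have hs : s = i ∨ s = j ∨ s = k := by omega
    rcases hs with rfl | rfl | rfl
    · simp [hij, hik]
    · simp [hij.symm, hjk]
    · simp [hik.symm, hjk.symm]
  simp only [h, Finset.prod_mul_distrib, Finset.prod_ite, Finset.prod_const, one_pow, mul_one, cnt]

end Polynomial

theorem sum_fusedTwist_diagonal (N : ℕ) (q α β γ : ℂ) :
    (∑ k, (![β * γ, α * γ, α * β] k) • Matrix.diagonal fun f : HIdx N =>
        ∏ b, if f b = k then 1 else q)
      = (α * β) • (Dop N q 0 * Dop N q 1) + (α * γ) • (Dop N q 0 * Dop N q 2)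
        + (β * γ) • (Dop N q 1 * Dop N q 2) := by
  simp only [Fin.sum_univ_three, Dop, Matrix.diagonal_mul_diagonal, Matrix.cons_val]
  rw [funext fun f => prod_ite_eq_pow_cnt q f (i := 1) (j := 2) (k := 0) (by decide) (by decide)
      (by decide),
    funext fun f => prod_ite_eq_pow_cnt q f (i := 0) (j := 2) (k := 1) (by decide) (by decide)
      (by decide),
    funext fun f => prod_ite_eq_pow_cnt q f (i := 0) (j := 1) (k := 2) (by decide) (by decide)
      (by decide)]
  abel

theorem DopInv_eq (N : ℕ) (q : ℂ) (i : Fin 3) : DopInv N q i = Dop N q⁻¹ i := by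
  simp only [DopInv, Dop, inv_pow]

theorem trace_fusedTop {N : ℕ} (p : ℂ) (ζ : Fin N → ℂ) (α β γ : ℂ) :
    (scal (HOp N) (fusedTwist α β γ) * ((List.finRange N).reverse.map fun b =>
        (fusedTop p (ζ b)).map (siteEmb b)).prod).trace
      = (∏ b, (ζ b ^ 3)⁻¹) • ((α * β) • (Dop N (p ^ 3) 0 * Dop N (p ^ 3) 1)
        + (α * γ) • (Dop N (p ^ 3) 0 * Dop N (p ^ 3) 2)
        + (β * γ) • (Dop N (p ^ 3) 1 * Dop N (p ^ 3) 2)) := by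
  rw [fusedTwist, trace_list_prod_of_triangular (fun k => -((k : ℕ) : ℤ))
    (fun i j h => Fin.ext (by simpa using h)) _ (fun b i j h => ?_)
    (fun b k s => (ζ b ^ 3)⁻¹ * if s = k then 1 else p ^ 3)
    (fun b k => by rw [Matrix.map_apply, fusedTop_diag]), ← sum_fusedTwist_diagonal,
    Finset.smul_sum]
  · refine Finset.sum_congr rfl fun k _ => ?_
    simp only [Finset.prod_mul_distrib]
    rw [smul_comm]
    congr 1
    rw [← Matrix.diagonal_smul]
    rfl
  · rw [Matrix.map_apply, fusedTop_eq_zero p (ζ b) (by simpa using h), map_zero]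

theorem trace_fusedBot {N : ℕ} (p : ℂ) (ζ : Fin N → ℂ) (α β γ : ℂ) :
    (scal (HOp N) (fusedTwist α β γ) * ((List.finRange N).reverse.map fun b =>
        (fusedBot p (ζ b)).map (siteEmb b)).prod).trace
      = (∏ b, -ζ b ^ 3) • ((α * β) • (DopInv N (p ^ 3) 0 * DopInv N (p ^ 3) 1)
        + (α * γ) • (DopInv N (p ^ 3) 0 * DopInv N (p ^ 3) 2)
        + (β * γ) • (DopInv N (p ^ 3) 1 * DopInv N (p ^ 3) 2)) := by
  simp only [DopInv_eq]
  rw [fusedTwist, trace_list_prod_of_triangular (fun k => ((k : ℕ) : ℤ))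
    (fun i j h => Fin.ext (by simpa using h)) _ (fun b i j h => ?_)
    (fun b k s => -ζ b ^ 3 * if s = k then 1 else (p ^ 3)⁻¹)
    (fun b k => by rw [Matrix.map_apply, fusedBot_diag]), ← sum_fusedTwist_diagonal,
    Finset.smul_sum]
  · refine Finset.sum_congr rfl fun k _ => ?_
    simp only [Finset.prod_mul_distrib]
    rw [smul_comm]
    congr 1
    rw [← Matrix.diagonal_smul]
    rfl
  · rw [Matrix.map_apply, fusedBot_eq_zero p (ζ b) (by simpa using h), map_zero]

/-- reconstruction of the fused transfer matrix `T₂` from `T₁`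
for the diagonal twist. -/
theorem T2_reconstruction_from_T1 (N : ℕ) (hN : 1 ≤ N) (q p : ℂ)
    (hq : q ≠ 0) (hq2 : q ^ 2 ≠ 1) (hp : p ^ 3 = q)
    (ζ : Fin N → ℂ) (hζ : ∀ b, ζ b ≠ 0)
    (hdist : ∀ n b : Fin N, n ≠ b → (ζ n ^ 3) ^ 2 ≠ (ζ b ^ 3) ^ 2)
    (hdist' : ∀ n b : Fin N, n ≠ b → (ζ n ^ 3) ^ 2 ≠ q ^ 2 * (ζ b ^ 3) ^ 2)
    (α β γ : ℂ) (u : ℂ) (hu : u ≠ 0) :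
    T2 N q p ζ (Ktw1 α β γ) u
      = (∏ b : Fin N,
            ((u ^ 3 / ζ b ^ 3 - ζ b ^ 3 / u ^ 3)
              * (u ^ 3 / (q * ζ b ^ 3) - q * ζ b ^ 3 / u ^ 3)))
          • ((1 / 2 : ℂ) •
              ((α * β) • (Dop N q 0 * Dop N q 1 + DopInv N q 0 * DopInv N q 1)
                + (α * γ) • (Dop N q 0 * Dop N q 2 + DopInv N q 0 * DopInv N q 2)
                + (β * γ) • (Dop N q 1 * Dop N q 2 + DopInv N q 1 * DopInv N q 2)))
        + ∑ n : Fin N,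
            (((u ^ 3 / ζ n ^ 3 + ζ n ^ 3 / u ^ 3) / 2)
              * (∏ b : Fin N,
                  (u ^ 3 / (q * ζ b ^ 3) - q * ζ b ^ 3 / u ^ 3)
                    / (ζ n ^ 3 / (q * ζ b ^ 3) - q * ζ b ^ 3 / ζ n ^ 3))
              * (∏ b ∈ Finset.univ.erase n,
                  (u ^ 3 / ζ b ^ 3 - ζ b ^ 3 / u ^ 3)
                    / (ζ n ^ 3 / ζ b ^ 3 - ζ b ^ 3 / ζ n ^ 3)))
              • (T1 N q ζ (Ktw1 α β γ) (ζ n / p) * T1 N q ζ (Ktw1 α β γ) (ζ n)) := by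
  subst hp
  have hp0 : p ≠ 0 := fun h => hq (by simp [h])
  have hξ : ∀ b, ζ b ^ 3 ≠ 0 := fun b => pow_ne_zero _ (hζ b)
  have hden : ∀ n b, ζ n ^ 3 / (p ^ 3 * ζ b ^ 3) - p ^ 3 * ζ b ^ 3 / ζ n ^ 3 ≠ 0 := by
    intro n b h
    rw [sub_eq_zero, div_eq_div_iff (mul_ne_zero hq (hξ b)) (hξ n)] at h
    by_cases hnb : n = b
    · subst hnb
      have h' : ((p ^ 3) ^ 2 - 1) * (ζ n ^ 3) ^ 2 = 0 := by linear_combination -h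
      exact (mul_ne_zero (sub_ne_zero.2 hq2) (pow_ne_zero _ (hξ n))) h'
    · exact hdist' n b hnb (by linear_combination h)
  rw [T2_eq_fused hp0 hq2 ζ hζ α β γ hu, trace_fused_eq hp0 hu ζ hζ]
  simp only [T1_mul_T1_eq_fused hp0 ζ hζ α β γ, fun n => trace_fused_eq hp0 (hζ n) ζ hζ α β γ]
  ext f g
  obtain ⟨P, hPd, hPN, hP0, hPe⟩ := exists_polynomial_list_prod
    (fun b => (fusedTop p (ζ b)).map (siteEmb b)) (fun b => (fusedBot p (ζ b)).map (siteEmb b))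
    (List.finRange N).reverse
    (Matrix.entryLinearMap ℂ ℂ f g ∘ₗ Matrix.traceLinearMap (Fin 3) ℂ (HOp N)
      ∘ₗ LinearMap.mulLeft ℂ (scal (HOp N) (fusedTwist α β γ)))
  simp only [List.length_reverse, List.length_finRange, LinearMap.comp_apply,
    LinearMap.mulLeft_apply, Matrix.traceLinearMap_apply, Matrix.entryLinearMap_apply]
    at hPd hPN hP0 hPe
  rw [trace_fusedTop, Matrix.smul_apply, smul_eq_mul, Finset.prod_inv_distrib] at hPN
  rw [trace_fusedBot, Matrix.smul_apply, smul_eq_mul] at hP0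
  have hprod : ∏ b, ζ b ^ 3 ≠ 0 := Finset.prod_ne_zero_iff.2 fun b _ => hξ b
  have hprod' : ∏ b, -ζ b ^ 3 ≠ 0 := Finset.prod_ne_zero_iff.2 fun b _ => neg_ne_zero.2 (hξ b)
  have key := laurent_interpolation (fun b => ζ b ^ 3) hξ hdist P hPd (u ^ 3) (pow_ne_zero _ hu)
  rw [hP0, mul_div_cancel_left₀ _ hprod', hPN, mul_right_comm (∏ b, ζ b ^ 3)⁻¹,
    inv_mul_cancel₀ hprod, one_mul] at key
  simp only [Matrix.smul_apply, Matrix.add_apply, Matrix.sum_apply, smul_eq_mul, ← hPe]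
  simp only [Matrix.smul_apply, Matrix.add_apply, smul_eq_mul] at key
  rw [mul_assoc, key, mul_add, Finset.mul_sum, Finset.prod_mul_distrib]
  congr 1
  · ring
  · refine Finset.sum_congr rfl fun n _ => ?_
    have hn : ∏ b, (ζ n ^ 3 / (p ^ 3 * ζ b ^ 3) - p ^ 3 * ζ b ^ 3 / ζ n ^ 3) ≠ 0 :=
      Finset.prod_ne_zero_iff.2 fun b _ => hden n b
    rw [Finset.prod_div_distrib (s := Finset.univ)]
    generalize ∏ b, (ζ n ^ 3 / (p ^ 3 * ζ b ^ 3) - p ^ 3 * ζ b ^ 3 / ζ n ^ 3) = c at hn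
    field_simp
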